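/- arXiv:0902.0943 — 2 statements merged into one kernel-verified Lean document; each statement's English description precedes it below -/
import Mathlib

section
/- Let d ≥ 2. There is a constant C depending only on d and ψ such that for any radii r, r' > 1 and any points y, y' ∈ ℝ^d, |⟨F_{y,r}, F_{y',r'}⟩| ≤ C (r r')^{(d−1)/2} / (1 + |y − y'| + |r − r'|)^{(d−1)/2}. -/
open MeasureTheory Metric Set
open scoped FourierTransform ENNReal NNReal

noncomputable section

abbrev Ed (d : ℕ) := EuclideanSpace ℝ (Fin d)

/-- Surface measure on the sphere of radius `r` centered at the origin in `ℝ^d`: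
the `(d-1)`-dimensional Hausdorff measure restricted to the sphere. -/
def sphereM (d : ℕ) (r : ℝ) : Measure (Ed d) :=
  (μH[(d : ℝ) - 1]).restrict (Metric.sphere (0 : Ed d) r)

/-- `ψ₀` is admissible: radial, `C^∞`, supported in the ball of radius `1/10`, and
its Fourier transform vanishes to order `20d` at the origin. -/
def Admissible (d : ℕ) (ψ₀ : Ed d → ℂ) : Prop :=
  ContDiff ℝ (⊤ : ℕ∞) ψ₀ ∧
  (∀ x, ψ₀ x ≠ 0 → ‖x‖ ≤ 1 / 10) ∧
  (∀ x y : Ed d, ‖x‖ = ‖y‖ → ψ₀ x = ψ₀ y) ∧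
  (∀ n : ℕ, n < 20 * d → iteratedFDeriv ℝ n (𝓕 ψ₀) 0 = 0)

/-- `ψ = ψ₀ * ψ₀` (convolution). -/
def psiOf (d : ℕ) (ψ₀ : Ed d → ℂ) : Ed d → ℂ :=
  fun x => ∫ y, ψ₀ y * ψ₀ (x - y)

/-- `F_{y,r} = σ_r * ψ(· - y)`. -/
def Fyr (d : ℕ) (ψ₀ : Ed d → ℂ) (y : Ed d) (r : ℝ) : Ed d → ℂ :=
  fun x => ∫ z, psiOf d ψ₀ (x - y - z) ∂(sphereM d r)

/-!
By Plancherel, the pairing of `F_{y,r}` and `F_{y',r'}` is the inverse Fourier transform, evaluated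
at `y' - y`, of the product of `|𝓕 ψ|²` with the Fourier transforms of the two surface measures. The
Fourier transform of the unit sphere, restricted to a line through the origin, solves a Bessel
equation, whose energy is almost monotone; this gives the decay `|ξ| ^ (-(d - 1) / 2)`. Used at
`r ξ` and at `r' ξ`, the decay turns `(r r') ^ (d - 1)` into `(r r') ^ ((d - 1) / 2)`. It is used a
third time for `y - y'`: the inverse Fourier transform of a radial function is radial, so it equals
its average over a sphere of radius `|y - y'|`, which is an integral against the Fourier transform
of that sphere. Each of the three uses costs a singular factor `|ξ| ^ (-(d - 1) / 2)`, compensated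
by the vanishing of `𝓕 ψ₀` at the origin. Finally, `|r - r'|` is of no concern: the supports of the
two functions are disjoint unless it is at most `|y - y'|` plus a constant.
-/

open InnerProductSpace Module
open scoped RealInnerProductSpace Pointwise Convolution SchwartzMap

section HausdorffSphere

variable {E : Type*} [NormedAddCommGroup E] [InnerProductSpace ℝ E]

lemma sphere_inter_halfSpace_subset_stereoInvFunAux_image {v : E} (hv : ‖v‖ = 1) :
    sphere (0 : E) 1 ∩ {x | ⟪v, x⟫ ≤ 0} ⊆
      (fun w : (ℝ ∙ v)ᗮ => stereoInvFunAux v (w : E)) '' closedBall 0 2 := by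
  rintro x ⟨hx, hvx : ⟪v, x⟫ ≤ 0⟩
  have hxv : x ≠ v := by
    rintro rfl
    rw [real_inner_self_eq_norm_sq, hv] at hvx
    norm_num at hvx
  refine ⟨stereoToFun v x, ?_, congrArg Subtype.val (stereo_left_inv hv (x := ⟨x, hx⟩) hxv)⟩
  have hproj : ‖(ℝ ∙ v)ᗮ.orthogonalProjectionOnto x‖ ≤ 1 :=
    (Submodule.norm_orthogonalProjectionOnto_apply_le _ _).trans_eq (mem_sphere_zero_iff_norm.1 hx)
  have hscale : ‖2 / (1 - innerSL ℝ v x)‖ ≤ 2 := by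
    rw [innerSL_apply_apply, Real.norm_of_nonneg (div_nonneg zero_le_two (by linarith)),
      div_le_iff₀ (by linarith)]
    linarith
  rw [mem_closedBall_zero_iff, stereoToFun_apply, norm_smul]
  linarith [mul_le_mul hscale hproj (norm_nonneg _) zero_le_two]

lemma closedBall_subset_orthogonalProjectionOnto_image_sphere {v : E} (hv : ‖v‖ = 1) :
    closedBall (0 : (ℝ ∙ v)ᗮ) 1 ⊆ (ℝ ∙ v)ᗮ.orthogonalProjectionOnto '' sphere (0 : E) 1 := by
  intro w hw
  have hw : ‖(w : E)‖ ≤ 1 := by simpa using hw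
  have hvw : ⟪(w : E), v⟫ = 0 := Submodule.mem_orthogonal_singleton_iff_inner_left.1 w.2
  refine ⟨w + √(1 - ‖(w : E)‖ ^ 2) • v, ?_, ?_⟩
  · rw [mem_sphere_zero_iff_norm, ← sq_eq_sq₀ (norm_nonneg _) zero_le_one, norm_add_sq_real,
      inner_smul_right, hvw, norm_smul, hv, mul_one, Real.norm_eq_abs, sq_abs,
      Real.sq_sqrt (by nlinarith [norm_nonneg (w : E)])]
    ring
  · rw [map_add, map_smul, Submodule.orthogonalProjectionOnto_mem_subspace_eq_self,
      Submodule.orthogonalProjectionOnto_apply_of_mem_orthogonal, smul_zero, add_zero]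
    exact (ℝ ∙ v).le_orthogonal_orthogonal (Submodule.mem_span_singleton_self v)

variable [FiniteDimensional ℝ E]

lemma natCast_finrank_orthogonal_span_singleton {v : E} (hv : v ≠ 0) :
    (finrank ℝ (ℝ ∙ v)ᗮ : ℝ) = finrank ℝ E - 1 := by
  have h := (ℝ ∙ v).finrank_add_finrank_orthogonal
  rw [finrank_span_singleton hv] at h
  rw [← h]
  push_cast
  ring

variable [MeasurableSpace E] [BorelSpace E]

lemma hausdorffMeasure_sphere_inter_halfSpace_lt_top {v : E} (hv : ‖v‖ = 1) :
    μH[(finrank ℝ E : ℝ) - 1] (sphere (0 : E) 1 ∩ {x | ⟪v, x⟫ ≤ 0}) < ⊤ := by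
  have hsmooth : ContDiff ℝ 1 fun w : (ℝ ∙ v)ᗮ => stereoInvFunAux v (w : E) :=
    contDiff_stereoInvFunAux.comp (ℝ ∙ v)ᗮ.subtypeL.contDiff
  have hcompact := isCompact_closedBall (0 : (ℝ ∙ v)ᗮ) 2
  obtain ⟨K, hK⟩ := LocallyLipschitzOn.exists_lipschitzOnWith_of_compact hcompact
    hsmooth.locallyLipschitz.locallyLipschitzOn
  rw [← natCast_finrank_orthogonal_span_singleton (norm_ne_zero_iff.1 (hv ▸ one_ne_zero))]
  calc μH[(finrank ℝ (ℝ ∙ v)ᗮ : ℝ)] (sphere (0 : E) 1 ∩ {x | ⟪v, x⟫ ≤ 0})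
      ≤ K ^ (finrank ℝ (ℝ ∙ v)ᗮ : ℝ) * μH[(finrank ℝ (ℝ ∙ v)ᗮ : ℝ)] (closedBall 0 2) :=
        (measure_mono (sphere_inter_halfSpace_subset_stereoInvFunAux_image hv)).trans
          (hK.hausdorffMeasure_image_le (Nat.cast_nonneg _))
    _ < ⊤ := ENNReal.mul_lt_top
        (ENNReal.rpow_lt_top_of_nonneg (Nat.cast_nonneg _) ENNReal.coe_ne_top)
        hcompact.measure_lt_top

variable (E) in
lemma hausdorffMeasure_unitSphere_lt_top :
    μH[(finrank ℝ E : ℝ) - 1] (sphere (0 : E) 1) < ⊤ := by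
  rcases subsingleton_or_nontrivial E with _ | _
  · simp [sphere_eq_empty_of_subsingleton one_ne_zero]
  obtain ⟨v, hv⟩ := exists_norm_eq E zero_le_one
  refine (measure_mono fun x hx => ?_).trans_lt
    (measure_union_lt_top (hausdorffMeasure_sphere_inter_halfSpace_lt_top hv)
      (hausdorffMeasure_sphere_inter_halfSpace_lt_top (v := -v) (by rwa [norm_neg])))
  exact (le_total ⟪v, x⟫ 0).imp (⟨hx, ·⟩) fun h => ⟨hx, by simpa using h⟩

variable (E) in
lemma hausdorffMeasure_unitSphere_pos [Nontrivial E] :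
    0 < μH[(finrank ℝ E : ℝ) - 1] (sphere (0 : E) 1) := by
  obtain ⟨v, hv⟩ := exists_norm_eq E zero_le_one
  rw [← natCast_finrank_orthogonal_span_singleton (norm_ne_zero_iff.1 (hv ▸ one_ne_zero))]
  exact (measure_closedBall_pos _ (0 : (ℝ ∙ v)ᗮ) one_pos).trans_le <|
    (measure_mono (closedBall_subset_orthogonalProjectionOnto_image_sphere hv)).trans <|
      hausdorffMeasure_orthogonalProjectionOnto_le _ _ _ (Nat.cast_nonneg _)

end HausdorffSphere

section Radial

variable {E F : Type*}

/-- A function is radial if its value at a point depends only on the norm of the point. -/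
def IsRadial [Norm E] (f : E → F) : Prop :=
  ∀ x y, ‖x‖ = ‖y‖ → f x = f y

variable [NormedAddCommGroup E] [InnerProductSpace ℝ E]

namespace IsRadial

lemma comp_linearIsometryEquiv {f : E → F} (hf : IsRadial f) (A : E ≃ₗᵢ[ℝ] E) : f ∘ A = f :=
  funext fun x => hf _ _ (A.norm_map x)

lemma of_comp_linearIsometryEquiv {f : E → F} (hf : ∀ A : E ≃ₗᵢ[ℝ] E, f ∘ A = f) :
    IsRadial f := fun x y hxy => by
  rw [← Submodule.reflection_sub hxy]
  exact (congrFun (hf (ℝ ∙ (x - y))ᗮ.reflection) x).symm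

variable [NormedAddCommGroup F] [NormedSpace ℂ F] [FiniteDimensional ℝ E] [MeasurableSpace E]
  [BorelSpace E] {f : E → F}

lemma fourier (hf : IsRadial f) : IsRadial (𝓕 f) :=
  of_comp_linearIsometryEquiv fun A => funext fun ξ => by
    rw [Function.comp_apply, ← Real.fourier_comp_linearIsometry, hf.comp_linearIsometryEquiv]

lemma fourierInv (hf : IsRadial f) : IsRadial (𝓕⁻ f) :=
  of_comp_linearIsometryEquiv fun A => funext fun x => by
    rw [Function.comp_apply, ← Real.fourierInv_comp_linearIsometry, hf.comp_linearIsometryEquiv]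

lemma convolution {𝕜 F₁ F₂ F₃ : Type*} [NontriviallyNormedField 𝕜] [NormedAddCommGroup F₁]
    [NormedSpace 𝕜 F₁] [NormedAddCommGroup F₂] [NormedSpace 𝕜 F₂] [NormedAddCommGroup F₃]
    [NormedSpace 𝕜 F₃] [NormedSpace ℝ F₃] {f : E → F₁} {g : E → F₂} (hf : IsRadial f)
    (hg : IsRadial g) (B : F₁ →L[𝕜] F₂ →L[𝕜] F₃) :
    IsRadial (f ⋆[B] g) :=
  of_comp_linearIsometryEquiv fun A => funext fun x => by
    simp only [Function.comp_apply, MeasureTheory.convolution]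
    rw [← A.measurePreserving.integral_comp A.toHomeomorph.measurableEmbedding]
    simp only [← map_sub, hf _ _ (A.norm_map _), hg _ _ (A.norm_map _)]

end IsRadial

end Radial

section SphereInvariant

variable {E : Type*} [NormedAddCommGroup E] [InnerProductSpace ℝ E] [MeasurableSpace E]

/-- The measures carried by the unit sphere and invariant under all linear isometries, of which the
surface measure is the one of interest; no normalization is imposed. -/
structure IsSphereInvariant (σ : Measure E) : Prop where
  ae_norm_eq_one : ∀ᵐ z ∂σ, ‖z‖ = 1
  measurePreserving : ∀ A : E ≃ₗᵢ[ℝ] E, MeasurePreserving A σ σ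

lemma isSphereInvariant_hausdorffMeasure_restrict [BorelSpace E] (s : ℝ) :
    IsSphereInvariant (μH[s].restrict (sphere (0 : E) 1)) where
  ae_norm_eq_one := by
    filter_upwards [ae_restrict_mem isClosed_sphere.measurableSet] with z hz
      using mem_sphere_zero_iff_norm.1 hz
  measurePreserving A := by
    have h := (A.toIsometryEquiv.measurePreserving_hausdorffMeasure s).restrict_preimage
      (isClosed_sphere (x := (0 : E)) (ε := 1)).measurableSet
    rwa [show A.toIsometryEquiv ⁻¹' sphere (0 : E) 1 = sphere 0 1 by ext; simp] at h

namespace IsSphereInvariant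

variable [BorelSpace E] {σ : Measure E}

lemma integral_comp {G : Type*} [NormedAddCommGroup G] [NormedSpace ℝ G]
    (hσ : IsSphereInvariant σ) (A : E ≃ₗᵢ[ℝ] E) (f : E → G) : ∫ z, f (A z) ∂σ = ∫ z, f z ∂σ :=
  (hσ.measurePreserving A).integral_comp A.toHomeomorph.measurableEmbedding f

lemma measurePreserving_map_smul (hσ : IsSphereInvariant σ) (r : ℝ) (A : E ≃ₗᵢ[ℝ] E) :
    MeasurePreserving A (σ.map (r • ·)) (σ.map (r • ·)) := by
  refine ⟨A.continuous.measurable, ?_⟩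
  conv_rhs => rw [← (hσ.measurePreserving A).map_eq]
  rw [Measure.map_map (by fun_prop) (by fun_prop), Measure.map_map (by fun_prop) (by fun_prop)]
  congr 1
  ext z
  simp

lemma isRadial_charFun (hσ : IsSphereInvariant σ) : IsRadial (charFun σ) :=
  .of_comp_linearIsometryEquiv fun A => funext fun ξ => by
    simp only [Function.comp_apply, charFun_apply]
    rw [← hσ.integral_comp A]
    simp only [A.inner_map_map]

variable [FiniteDimensional ℝ E] [IsFiniteMeasure σ]

lemma integrable_of_continuous {G : Type*} [NormedAddCommGroup G] {f : E → G}
    (hσ : IsSphereInvariant σ) (hf : Continuous f) : Integrable f σ := by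
  obtain ⟨B, hB⟩ := (isCompact_sphere (0 : E) 1).exists_bound_of_continuousOn hf.continuousOn
  refine .of_bound hf.aestronglyMeasurable B ?_
  filter_upwards [hσ.ae_norm_eq_one] with z hz using hB z (mem_sphere_zero_iff_norm.2 hz)

lemma charFun_eq_integral_cos (hσ : IsSphereInvariant σ) (ξ : E) :
    charFun σ ξ = ∫ z, Real.cos ⟪ξ, z⟫ ∂σ := by
  have hodd : ∫ z, Real.sin ⟪ξ, z⟫ ∂σ = 0 := by
    have h := hσ.integral_comp (.neg ℝ) fun z => Real.sin ⟪ξ, z⟫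
    simp only [LinearIsometryEquiv.coe_neg, inner_neg_right, Real.sin_neg, integral_neg] at h
    linarith
  calc charFun σ ξ = ∫ z, ((Real.cos ⟪ξ, z⟫ : ℂ) + (Real.sin ⟪ξ, z⟫ : ℂ) * Complex.I) ∂σ := by
        simp only [charFun_apply, Complex.exp_mul_I, Complex.ofReal_cos, Complex.ofReal_sin,
          real_inner_comm]
    _ = ∫ z, Real.cos ⟪ξ, z⟫ ∂σ := by
        rw [integral_add (hσ.integrable_of_continuous (by fun_prop))
            (hσ.integrable_of_continuous (by fun_prop)), integral_mul_const,
          integral_complex_ofReal, integral_complex_ofReal, hodd, Complex.ofReal_zero, zero_mul,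
          add_zero]

lemma hasDerivAt_integral (hσ : IsSphereInvariant σ) {F F' : ℝ → E → ℝ}
    (hF : Continuous F.uncurry) (hF' : Continuous F'.uncurry)
    (h : ∀ t z, HasDerivAt (fun t => F t z) (F' t z) t) (t : ℝ) :
    HasDerivAt (fun t => ∫ z, F t z ∂σ) (∫ z, F' t z ∂σ) t := by
  obtain ⟨B, hB⟩ := ((isCompact_closedBall t 1).prod
    (isCompact_sphere (0 : E) 1)).exists_bound_of_continuousOn hF'.continuousOn
  refine (hasDerivAt_integral_of_dominated_loc_of_deriv_le (bound := fun _ => B)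
    (closedBall_mem_nhds t one_pos)
    (.of_forall fun s => (hF.comp (.prodMk_right s)).aestronglyMeasurable)
    (hσ.integrable_of_continuous (hF.comp (.prodMk_right t)))
    (hF'.comp (.prodMk_right t)).aestronglyMeasurable ?_ (integrable_const B)
    (.of_forall fun z s _ => h s z)).2
  filter_upwards [hσ.ae_norm_eq_one] with z hz s hs using
    hB (s, z) ⟨hs, mem_sphere_zero_iff_norm.2 hz⟩

lemma integral_fderiv_apply_eq_zero (hσ : IsSphereInvariant σ) {f : E → ℝ} (hf : ContDiff ℝ 1 f)
    {A : E →L[ℝ] E} (hA : A ∈ skewAdjoint (E →L[ℝ] E)) : ∫ z, fderiv ℝ f z (A z) ∂σ = 0 := by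
  let := NormedAlgebra.restrictScalars ℚ ℝ (E →L[ℝ] E)
  have hexp : Continuous fun t : ℝ => NormedSpace.exp (t • A) :=
    NormedSpace.exp_continuous.comp (by fun_prop)
  have hflow : Continuous fun p : ℝ × E => NormedSpace.exp (p.1 • A) p.2 :=
    (hexp.comp continuous_fst).clm_apply continuous_snd
  have hderiv := hσ.hasDerivAt_integral (F := fun t z => f (NormedSpace.exp (t • A) z))
    (F' := fun t z => fderiv ℝ f (NormedSpace.exp (t • A) z) (A (NormedSpace.exp (t • A) z)))
    (hf.continuous.comp hflow)
    (((hf.continuous_fderiv one_ne_zero).comp hflow).clm_apply (A.continuous.comp hflow))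
    (fun t z => ((hf.differentiable one_ne_zero _).hasFDerivAt.comp_hasDerivAt t
      ((hasDerivAt_exp_smul_const' A t).clm_apply (hasDerivAt_const t z))).congr_deriv
        (by simp)) 0
  have hconst (t : ℝ) : ∫ z, f (NormedSpace.exp (t • A) z) ∂σ = ∫ z, f z ∂σ :=
    hσ.integral_comp (Unitary.linearIsometryEquiv ⟨_, NormedSpace.exp_mem_unitary_of_mem_skewAdjoint
      (skewAdjoint.smul_mem t hA)⟩) f
  simp only [hconst, zero_smul, NormedSpace.exp_zero] at hderiv
  exact hderiv.unique (hasDerivAt_const _ _)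

lemma integral_inner_mul_sin (hσ : IsSphereInvariant σ) {v w : E} (hv : ‖v‖ = 1) (hw : ‖w‖ = 1)
    (hvw : ⟪v, w⟫ = 0) (s : ℝ) :
    ∫ z, ⟪v, z⟫ * Real.sin (s * ⟪v, z⟫) ∂σ = s * ∫ z, ⟪w, z⟫ ^ 2 * Real.cos (s * ⟪v, z⟫) ∂σ := by
  let A : E →L[ℝ] E := (innerSL ℝ v).smulRight w - (innerSL ℝ w).smulRight v
  have hA : A ∈ skewAdjoint (E →L[ℝ] E) := by
    rw [skewAdjoint.mem_iff, ContinuousLinearMap.star_eq_adjoint, eq_comm,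
      ContinuousLinearMap.eq_adjoint_iff]
    intro x y
    simp [A, inner_sub_left, inner_sub_right, inner_smul_left, inner_smul_right,
      real_inner_comm]
    ring
  have hf : ContDiff ℝ 1 fun z : E => ⟪w, z⟫ * Real.sin (s * ⟪v, z⟫) :=
    (innerSL ℝ w).contDiff.mul (contDiff_const.mul (innerSL ℝ v).contDiff).sin
  have hderiv (z : E) : fderiv ℝ (fun z : E => ⟪w, z⟫ * Real.sin (s * ⟪v, z⟫)) z (A z) =
      ⟪v, z⟫ * Real.sin (s * ⟪v, z⟫) - s * (⟪w, z⟫ ^ 2 * Real.cos (s * ⟪v, z⟫)) := by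
    have hsin := (((innerSL ℝ v).hasFDerivAt (x := z)).const_mul s).sin
    have hfz := ((innerSL ℝ w).hasFDerivAt (x := z)).mul hsin
    refine (DFunLike.congr_fun hfz.fderiv (A z)).trans ?_
    simp [A, inner_sub_right, inner_smul_right, hv, hw, hvw, real_inner_comm v w]
    ring
  have h := hσ.integral_fderiv_apply_eq_zero hf hA
  simp only [hderiv] at h
  rw [integral_sub (hσ.integrable_of_continuous (by fun_prop))
    (hσ.integrable_of_continuous (by fun_prop)), integral_const_mul] at h
  exact sub_eq_zero.1 h

lemma mul_integral_one_sub_inner_sq_mul_cos {ι : Type*} [Fintype ι] (hσ : IsSphereInvariant σ)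
    (b : OrthonormalBasis ι ℝ E) (i : ι) (s : ℝ) :
    s * ∫ z, (1 - ⟪b i, z⟫ ^ 2) * Real.cos (s * ⟪b i, z⟫) ∂σ =
      (Fintype.card ι - 1) * ∫ z, ⟪b i, z⟫ * Real.sin (s * ⟪b i, z⟫) ∂σ := by
  classical
  have hsum : ∫ z, (1 - ⟪b i, z⟫ ^ 2) * Real.cos (s * ⟪b i, z⟫) ∂σ =
      ∑ j ∈ Finset.univ.erase i, ∫ z, ⟪b j, z⟫ ^ 2 * Real.cos (s * ⟪b i, z⟫) ∂σ := by
    rw [← integral_finsetSum _ fun j _ => hσ.integrable_of_continuous (by fun_prop)]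
    refine integral_congr_ae ?_
    filter_upwards [hσ.ae_norm_eq_one] with z hz
    have hnorm := b.sum_sq_inner_right z
    rw [hz, one_pow, ← Finset.add_sum_erase _ _ (Finset.mem_univ i)] at hnorm
    rw [← Finset.sum_mul, eq_sub_of_add_eq' hnorm]
  have hterm : ∀ j ∈ Finset.univ.erase i,
      s * ∫ z, ⟪b j, z⟫ ^ 2 * Real.cos (s * ⟪b i, z⟫) ∂σ =
        ∫ z, ⟪b i, z⟫ * Real.sin (s * ⟪b i, z⟫) ∂σ := fun j hj =>
    (hσ.integral_inner_mul_sin (b.norm_eq_one i) (b.norm_eq_one j)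
      (b.orthonormal.2 (Finset.ne_of_mem_erase hj).symm) s).symm
  rw [hsum, Finset.mul_sum, Finset.sum_congr rfl hterm, Finset.sum_const,
    Finset.card_erase_of_mem (Finset.mem_univ i), Finset.card_univ,
    nsmul_eq_mul, Nat.cast_pred (Fintype.card_pos_iff.2 ⟨i⟩)]

end IsSphereInvariant

end SphereInvariant

section FourierConvolution

variable {V F : Type*} [NormedAddCommGroup V] [MeasurableSpace V]

/-- The convolution `f ∗ μ` of a function with a measure. -/
def convMeasure [NormedAddCommGroup F] [NormedSpace ℝ F] (f : V → F) (μ : Measure V) (x : V) : F :=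
  ∫ z, f (x - z) ∂μ

variable [InnerProductSpace ℝ V]

lemma charFun_two_pi_smul (μ : Measure V) (ξ : V) :
    charFun μ ((2 * Real.pi) • ξ) = ∫ z, (Real.fourierChar ⟪z, ξ⟫ : ℂ) ∂μ := by
  simp only [charFun_apply, Real.fourierChar_apply, inner_smul_right]

variable [FiniteDimensional ℝ V] [BorelSpace V]

lemma integrable_comp_sub_prod [NormedAddCommGroup F] [NormedSpace ℝ F] {f : V → F}
    (hf : Integrable f) (μ : Measure V) [IsFiniteMeasure μ] :
    Integrable (fun p : V × V => f (p.1 - p.2)) (volume.prod μ) := by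
  simpa using (integrable_const (1 : ℝ)).convolution_integrand (.lsmul ℝ ℝ) (ν := μ) hf

lemma integrable_convMeasure [NormedAddCommGroup F] [NormedSpace ℝ F] {f : V → F}
    (hf : Integrable f) (μ : Measure V) [IsFiniteMeasure μ] : Integrable (convMeasure f μ) :=
  (integrable_comp_sub_prod hf μ).integral_prod_left

lemma continuous_convMeasure [NormedAddCommGroup F] [NormedSpace ℝ F] {f : V → F} {M : ℝ}
    (hf : Continuous f) (hM : ∀ x, ‖f x‖ ≤ M) (μ : Measure V) [IsFiniteMeasure μ] :
    Continuous (convMeasure f μ) :=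
  continuous_of_dominated (fun x => Continuous.aestronglyMeasurable (by fun_prop))
    (fun x => .of_forall fun z => hM (x - z)) (integrable_const M)
    (.of_forall fun z => by fun_prop)

variable [NormedAddCommGroup F] [NormedSpace ℂ F]

lemma fourier_comp_sub_right (f : V → F) (y ξ : V) :
    𝓕 (fun x => f (x - y)) ξ = Real.fourierChar (-⟪y, ξ⟫) • 𝓕 f ξ := by
  simpa [Function.comp_def, sub_eq_add_neg] using! congrFun
    (VectorFourier.fourierIntegral_comp_add_right Real.fourierChar volume (innerₗ V) f (-y)) ξ

lemma fourier_convMeasure [CompleteSpace F] {f : V → F} (hf : Integrable f) (μ : Measure V)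
    [IsFiniteMeasure μ] (ξ : V) :
    𝓕 (convMeasure f μ) ξ = charFun μ ((2 * Real.pi) • -ξ) • 𝓕 f ξ := by
  have hconv := integrable_comp_sub_prod hf μ
  have hint : Integrable (Function.uncurry fun x z => Real.fourierChar (-⟪x, ξ⟫) • f (x - z))
      (volume.prod μ) := by
    refine hconv.congr' (.smul ?_ hconv.aestronglyMeasurable) (.of_forall fun p => ?_)
    · exact Continuous.aestronglyMeasurable (by fun_prop)
    · exact (Circle.norm_smul _ _).symm
  calc 𝓕 (convMeasure f μ) ξ = ∫ x, ∫ z, Real.fourierChar (-⟪x, ξ⟫) • f (x - z) ∂μ := by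
        simp only [Real.fourier_eq, convMeasure, Circle.smul_def, integral_smul]
    _ = ∫ z, 𝓕 (fun x => f (x - z)) ξ ∂μ := by
        simp only [integral_integral_swap hint, Real.fourier_eq]
    _ = charFun μ ((2 * Real.pi) • -ξ) • 𝓕 f ξ := by
        simp only [fourier_comp_sub_right, charFun_two_pi_smul, Circle.smul_def,
          inner_neg_right, integral_smul_const]

lemma integrable_fourier_convMeasure [CompleteSpace F] {f : V → F} (hf : Integrable f)
    (hf' : Integrable (𝓕 f)) (μ : Measure V) [IsFiniteMeasure μ] :
    Integrable (𝓕 (convMeasure f μ)) := by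
  simp only [funext (fourier_convMeasure hf μ)]
  exact hf'.bdd_smul (μ.real univ) (Continuous.aestronglyMeasurable (by fun_prop))
    (.of_forall fun ξ => norm_charFun_le _)

lemma continuous_fourier_of_integrable {f : V → F} (hf : Integrable f) : Continuous (𝓕 f) :=
  VectorFourier.fourierIntegral_continuous Real.continuous_fourierChar continuous_inner hf

lemma continuous_fourierInv_of_integrable {f : V → F} (hf : Integrable f) :
    Continuous (𝓕⁻ f) :=
  VectorFourier.fourierIntegral_continuous (L := -innerₗ V) Real.continuous_fourierChar
    continuous_inner.neg hf

lemma integral_fourierInv_eq {h : V → ℂ} (hh : Integrable h) (μ : Measure V) [IsFiniteMeasure μ] :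
    ∫ z, 𝓕⁻ h z ∂μ = ∫ ξ, h ξ * charFun μ ((2 * Real.pi) • ξ) := by
  have hswap := VectorFourier.integral_fourierIntegral_smul_eq_flip (L := -innerₗ V) (μ := volume)
    (ν := μ) Real.continuous_fourierChar continuous_inner.neg hh (integrable_const (1 : ℂ))
  simp only [smul_eq_mul, mul_one] at hswap
  refine hswap.trans (integral_congr_ae (.of_forall fun ξ => ?_))
  simp only [charFun_two_pi_smul]
  simp [VectorFourier.fourierIntegral, Circle.smul_def, real_inner_comm]

lemma integral_mul_conj_eq_integral_fourier {f g : V → ℂ} (hf : Integrable f)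
    (hfc : Continuous f) (hf' : Integrable (𝓕 f)) (hg : Integrable g) :
    ∫ x, f x * (starRingEnd ℂ) (g x) = ∫ ξ, 𝓕 f ξ * (starRingEnd ℂ) (𝓕 g ξ) := by
  have h := VectorFourier.integral_sesq_fourierIntegral_eq_neg_flip
    (innerSL ℂ : ℂ →L⋆[ℂ] ℂ →L[ℂ] ℂ) (L := innerₗ V) Real.continuous_fourierChar
    continuous_inner hg hf'
  rw [flip_innerₗ] at h
  change ∫ ξ, innerSL ℂ (𝓕 g ξ) (𝓕 f ξ) = ∫ x, innerSL ℂ (g x) (𝓕⁻ (𝓕 f) x) at h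
  simpa only [hfc.fourierInv_fourier_eq hf hf', innerSL_apply_apply, RCLike.inner_apply]
    using h.symm

lemma integrable_fourier_mul_conj_fourier {f g : V → ℂ} (hf : Integrable (𝓕 f))
    (hg : Integrable g) : Integrable fun ξ => 𝓕 f ξ * (starRingEnd ℂ) (𝓕 g ξ) := by
  refine hf.mul_bdd (c := ∫ x, ‖g x‖)
    (Complex.continuous_conj.comp (continuous_fourier_of_integrable hg)).aestronglyMeasurable
    (.of_forall fun ξ => ?_)
  rw [RCLike.norm_conj]
  exact VectorFourier.norm_fourierIntegral_le_integral_norm _ _ _ _ _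

lemma integral_comp_sub_mul_conj_eq_fourierInv {f g : V → ℂ} (hf : Integrable f)
    (hfc : Continuous f) (hf' : Integrable (𝓕 f)) (hg : Integrable g) (y y' : V) :
    ∫ x, f (x - y) * (starRingEnd ℂ) (g (x - y')) =
      𝓕⁻ (fun ξ => 𝓕 f ξ * (starRingEnd ℂ) (𝓕 g ξ)) (y' - y) := by
  have hint : Integrable (𝓕 fun x => f (x - y)) := by
    have hchar : Continuous fun ξ => Real.fourierChar (-⟪y, ξ⟫) := by fun_prop
    simp only [funext (fourier_comp_sub_right f y)]
    refine hf'.congr' (hchar.aestronglyMeasurable.smul hf'.1) (.of_forall fun ξ => ?_)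
    exact (Circle.norm_smul _ _).symm
  rw [integral_mul_conj_eq_integral_fourier (hf.comp_sub_right y) (by fun_prop) hint
    (hg.comp_sub_right y'), Real.fourierInv_eq]
  congr with ξ
  rw [fourier_comp_sub_right, fourier_comp_sub_right, inner_sub_right, sub_eq_add_neg,
    AddChar.map_add_eq_mul]
  simp [Circle.smul_def, real_inner_comm, ← Circle.coe_inv_eq_conj, AddChar.map_neg_eq_inv]
  ring

end FourierConvolution

section RadialOscillation

lemma antitoneOn_sq_add_sq_mul_exp {κ : ℝ} {u v : ℝ → ℝ} (hu : ∀ s > 0, HasDerivAt u (v s) s)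
    (hv : ∀ s > 0, HasDerivAt v ((κ / s ^ 2 - 1) * u s) s) :
    AntitoneOn (fun s => (u s ^ 2 + v s ^ 2) * Real.exp (|κ| * s⁻¹)) (Ioi 0) := by
  have hderiv (s : ℝ) (hs : 0 < s) :
      HasDerivAt (fun s => (u s ^ 2 + v s ^ 2) * Real.exp (|κ| * s⁻¹))
        (Real.exp (|κ| * s⁻¹) * (s ^ 2)⁻¹ *
          (2 * κ * (u s * v s) - |κ| * (u s ^ 2 + v s ^ 2))) s := by
    refine HasDerivAt.congr_deriv ((((hu s hs).pow 2).add ((hv s hs).pow 2)).mul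
      (((hasDerivAt_inv hs.ne').const_mul |κ|).exp)) ?_
    simp only [Pi.add_apply, Pi.pow_apply]
    ring
  refine antitoneOn_of_deriv_nonpos (convex_Ioi 0)
    (fun s hs => (hderiv s hs).continuousAt.continuousWithinAt) ?_ ?_ <;>
    rw [interior_Ioi] <;> intro s (hs : 0 < s)
  · exact (hderiv s hs).differentiableAt.differentiableWithinAt
  rw [(hderiv s hs).deriv]
  refine mul_nonpos_of_nonneg_of_nonpos (by positivity) (sub_nonpos.2 ?_)
  calc 2 * κ * (u s * v s) ≤ |2 * κ * (u s * v s)| := le_abs_self _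
    _ = |κ| * (2 * |u s| * |v s|) := by simp only [abs_mul, Nat.abs_ofNat]; ring
    _ ≤ |κ| * (u s ^ 2 + v s ^ 2) := by
        rw [← sq_abs (u s), ← sq_abs (v s)]
        gcongr
        exact two_mul_le_add_sq _ _

/- Liouville normal form: `u = s ^ (n / 2) * p` solves `u'' = (a (a - 1) / s ^ 2 - 1) * u` with
`a = n / 2`. -/
lemma exists_abs_le_mul_rpow_of_hasDerivAt {n : ℝ} {p q : ℝ → ℝ}
    (hp : ∀ s > 0, HasDerivAt p (q s) s) (hq : ∀ s > 0, HasDerivAt q (-p s - n / s * q s) s) :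
    ∃ C, ∀ s, 1 ≤ s → |p s| ≤ C * s ^ (-(n / 2)) := by
  set a := n / 2 with ha
  let u : ℝ → ℝ := fun s => s ^ a * p s
  let v : ℝ → ℝ := fun s => s ^ a * (q s + a * (s⁻¹ * p s))
  have hpow (s : ℝ) (hs : 0 < s) : HasDerivAt (fun s : ℝ => s ^ a) (a * (s ^ a * s⁻¹)) s := by
    rw [← div_eq_mul_inv, ← Real.rpow_sub_one hs.ne']
    exact Real.hasDerivAt_rpow_const (.inl hs.ne')
  have hu (s : ℝ) (hs : 0 < s) : HasDerivAt u (v s) s :=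
    ((hpow s hs).mul (hp s hs)).congr_deriv (by simp only [v]; ring)
  have hv (s : ℝ) (hs : 0 < s) : HasDerivAt v ((a * (a - 1) / s ^ 2 - 1) * u s) s := by
    refine ((hpow s hs).mul ((hq s hs).add
      (((hasDerivAt_inv hs.ne').mul (hp s hs)).const_mul a))).congr_deriv ?_
    rw [show n = 2 * a by rw [ha]; ring]
    simp only [u, Pi.add_apply, Pi.mul_apply]
    field_simp
    ring
  let energy : ℝ → ℝ := fun s => (u s ^ 2 + v s ^ 2) * Real.exp (|a * (a - 1)| * s⁻¹)
  refine ⟨√(energy 1), fun s hs => ?_⟩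
  have hs0 : 0 < s := one_pos.trans_le hs
  have hu_le : u s ^ 2 ≤ energy 1 :=
    calc u s ^ 2 ≤ u s ^ 2 + v s ^ 2 := le_add_of_nonneg_right (sq_nonneg _)
      _ ≤ energy s := le_mul_of_one_le_right (by positivity) (Real.one_le_exp (by positivity))
      _ ≤ energy 1 := antitoneOn_sq_add_sq_mul_exp hu hv (mem_Ioi.2 one_pos) hs0 hs
  calc |p s| = |u s| * s ^ (-a) := by
        rw [abs_mul, abs_of_pos (Real.rpow_pos_of_pos hs0 a), mul_right_comm,
          ← Real.rpow_add hs0, add_neg_cancel, Real.rpow_zero, one_mul]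
    _ ≤ √(energy 1) * s ^ (-a) := by
        gcongr
        exact Real.abs_le_sqrt hu_le

lemma one_add_mul_rpow_neg_le {a : ℝ} (ha : 0 ≤ a) {ρ t : ℝ} (hρ : 0 ≤ ρ) (ht : 0 < t) :
    (1 + ρ * t) ^ (-a) ≤ (1 + ρ) ^ (-a) * (1 + t ^ (-a)) := by
  rcases le_total 1 t with h | h
  · calc (1 + ρ * t) ^ (-a) ≤ (1 + ρ) ^ (-a) :=
          Real.rpow_le_rpow_of_nonpos (by positivity) (by nlinarith) (neg_nonpos.2 ha)
      _ ≤ (1 + ρ) ^ (-a) * (1 + t ^ (-a)) :=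
          le_mul_of_one_le_right (by positivity) (le_add_of_nonneg_right (by positivity))
  · calc (1 + ρ * t) ^ (-a) ≤ ((1 + ρ) * t) ^ (-a) :=
          Real.rpow_le_rpow_of_nonpos (by positivity) (by linarith) (neg_nonpos.2 ha)
      _ = (1 + ρ) ^ (-a) * t ^ (-a) := Real.mul_rpow (by positivity) ht.le
      _ ≤ (1 + ρ) ^ (-a) * (1 + t ^ (-a)) := by
          gcongr
          exact le_add_of_nonneg_left zero_le_one

lemma exists_le_mul_one_add_rpow_neg {a : ℝ} (ha : 0 ≤ a) {g : ℝ → ℝ} {B C : ℝ}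
    (hB : ∀ s, g s ≤ B) (hC : ∀ s, 1 ≤ s → g s ≤ C * s ^ (-a)) :
    ∃ D ≥ 0, ∀ s, 0 ≤ s → g s ≤ D * (1 + s) ^ (-a) := by
  refine ⟨max |B| |C| * 2 ^ a, by positivity, fun s hs => ?_⟩
  calc g s ≤ max |B| |C| * max 1 s ^ (-a) := by
        rcases le_total s 1 with h | h
        · rw [max_eq_left h, Real.one_rpow, mul_one]
          exact (hB s).trans ((le_abs_self B).trans (le_max_left _ _))
        · rw [max_eq_right h]
          exact (hC s h).trans (by gcongr; exact (le_abs_self C).trans (le_max_right _ _))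
    _ = max |B| |C| * 2 ^ a * (2 * max 1 s) ^ (-a) := by
        rw [Real.mul_rpow zero_le_two (by positivity), mul_assoc, ← mul_assoc (2 ^ a),
          ← Real.rpow_add zero_lt_two, add_neg_cancel, Real.rpow_zero, one_mul]
    _ ≤ max |B| |C| * 2 ^ a * (1 + s) ^ (-a) := by
        gcongr ?_ * ?_
        exact Real.rpow_le_rpow_of_nonpos (by positivity)
          (by linarith [le_max_left 1 s, le_max_right 1 s]) (neg_nonpos.2 ha)

end RadialOscillation

section SphereDecay

variable {E : Type*} [NormedAddCommGroup E] [InnerProductSpace ℝ E]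

variable (E) in
/-- The exponent `(dim E - 1) / 2` at which the Fourier transform of a rotation invariant measure on
the unit sphere of `E` decays. -/
def sphereDecayExponent : ℝ := ((finrank ℝ E : ℝ) - 1) / 2

variable [FiniteDimensional ℝ E]

variable (E) in
lemma sphereDecayExponent_nonneg [Nontrivial E] : 0 ≤ sphereDecayExponent E :=
  div_nonneg (sub_nonneg.2 (Nat.one_le_cast.2 finrank_pos)) zero_le_two

namespace IsSphereInvariant

variable [MeasurableSpace E] [BorelSpace E] {σ : Measure E} [IsFiniteMeasure σ]

lemma exists_norm_charFun_smul_le {ι : Type*} [Fintype ι] (hσ : IsSphereInvariant σ)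
    (b : OrthonormalBasis ι ℝ E) (i : ι) :
    ∃ C, ∀ s : ℝ, 1 ≤ s → ‖charFun σ (s • b i)‖ ≤ C * s ^ (-(((Fintype.card ι : ℝ) - 1) / 2)) := by
  have hinner (s : ℝ) (z : E) : HasDerivAt (fun s : ℝ => s * ⟪b i, z⟫) ⟪b i, z⟫ s := by
    simpa using (hasDerivAt_id s).mul_const ⟪b i, z⟫
  have hp := hσ.hasDerivAt_integral (F := fun s z => Real.cos (s * ⟪b i, z⟫))
    (F' := fun s z => -(⟪b i, z⟫ * Real.sin (s * ⟪b i, z⟫))) (by fun_prop) (by fun_prop)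
    fun s z => (hinner s z).cos.congr_deriv (by ring)
  have hq := hσ.hasDerivAt_integral (F := fun s z => -(⟪b i, z⟫ * Real.sin (s * ⟪b i, z⟫)))
    (F' := fun s z => (1 - ⟪b i, z⟫ ^ 2) * Real.cos (s * ⟪b i, z⟫) - Real.cos (s * ⟪b i, z⟫))
    (by fun_prop) (by fun_prop)
    fun s z => ((hinner s z).sin.const_mul ⟪b i, z⟫).neg.congr_deriv (by ring)
  obtain ⟨C, hC⟩ := exists_abs_le_mul_rpow_of_hasDerivAt (n := Fintype.card ι - 1)
    (fun s _ => hp s) fun s hs => (hq s).congr_deriv <| by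
      have hode := hσ.mul_integral_one_sub_inner_sq_mul_cos b i s
      rw [mul_comm, ← eq_div_iff hs.ne'] at hode
      rw [integral_sub (hσ.integrable_of_continuous (by fun_prop))
        (hσ.integrable_of_continuous (by fun_prop)), integral_neg, hode]
      ring
  refine ⟨C, fun s hs => ?_⟩
  simpa only [hσ.charFun_eq_integral_cos, real_inner_smul_left, Complex.norm_real,
    Real.norm_eq_abs] using hC s hs

lemma exists_norm_charFun_le [Nontrivial E] (hσ : IsSphereInvariant σ) :
    ∃ C ≥ 0, ∀ ξ, ‖charFun σ ξ‖ ≤ C * (1 + ‖ξ‖) ^ (-sphereDecayExponent E) := by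
  have hpos : 0 < finrank ℝ E := finrank_pos
  let b := stdOrthonormalBasis ℝ E
  obtain ⟨C, hC⟩ := hσ.exists_norm_charFun_smul_le b ⟨0, hpos⟩
  rw [Fintype.card_fin] at hC
  obtain ⟨D, hD0, hD⟩ := exists_le_mul_one_add_rpow_neg (sphereDecayExponent_nonneg E)
    (fun s => norm_charFun_le (s • b ⟨0, hpos⟩)) hC
  refine ⟨D, hD0, fun ξ => ?_⟩
  rw [hσ.isRadial_charFun ξ (‖ξ‖ • b ⟨0, hpos⟩) (by simp [norm_smul])]
  exact hD _ (norm_nonneg _)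

lemma exists_norm_charFun_map_smul_le [Nontrivial E] (hσ : IsSphereInvariant σ) :
    ∃ C ≥ 0, ∀ r ≥ 0, ∀ ξ, ‖charFun (σ.map (r • ·)) ((2 * Real.pi) • ξ)‖ ≤
      C * (1 + r * ‖ξ‖) ^ (-sphereDecayExponent E) := by
  obtain ⟨C, hC0, hC⟩ := hσ.exists_norm_charFun_le
  refine ⟨C, hC0, fun r hr ξ => ?_⟩
  rw [charFun_map_smul]
  refine (hC _).trans (mul_le_mul_of_nonneg_left (Real.rpow_le_rpow_of_nonpos (by positivity) ?_
    (neg_nonpos.2 (sphereDecayExponent_nonneg E))) hC0)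
  rw [norm_smul, norm_smul, Real.norm_of_nonneg hr, Real.norm_of_nonneg Real.two_pi_pos.le]
  gcongr
  exact le_mul_of_one_le_left (norm_nonneg ξ) (by linarith [Real.pi_gt_three])

/- A radial `𝓕⁻ h` is its own average over the sphere of radius `‖w‖`, and Fubini moves the average
onto the kernel, where the decay of `charFun σ` applies. -/
lemma exists_norm_fourierInv_le [Nontrivial E] [NeZero σ] (hσ : IsSphereInvariant σ) :
    ∃ C ≥ 0, ∀ (h : E → ℂ) (g : E → ℝ), IsRadial h → Integrable h → Integrable g →
      (∀ ξ ≠ 0, ‖h ξ‖ * (1 + ‖ξ‖ ^ (-sphereDecayExponent E)) ≤ g ξ) →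
      ∀ w, ‖𝓕⁻ h w‖ ≤ C * (1 + ‖w‖) ^ (-sphereDecayExponent E) * ∫ ξ, g ξ := by
  obtain ⟨C, hC0, hC⟩ := hσ.exists_norm_charFun_map_smul_le
  have hmass : 0 < σ.real univ := measureReal_univ_pos
  refine ⟨C / σ.real univ, by positivity, fun h g hrad hint hg hhg w => ?_⟩
  have havg : ∫ z, 𝓕⁻ h z ∂σ.map (‖w‖ • ·) = σ.real univ • 𝓕⁻ h w := by
    rw [integral_map (by fun_prop) (continuous_fourierInv_of_integrable hint).aestronglyMeasurable,
      ← integral_const]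
    refine integral_congr_ae ?_
    filter_upwards [hσ.ae_norm_eq_one] with z hz
    exact hrad.fourierInv _ _ (by simp [norm_smul, hz])
  have hbound : ∀ᵐ ξ, ‖h ξ * charFun (σ.map (‖w‖ • ·)) ((2 * Real.pi) • ξ)‖ ≤
      C * (1 + ‖w‖) ^ (-sphereDecayExponent E) * g ξ := by
    filter_upwards [Measure.ae_ne volume 0] with ξ hξ
    calc ‖h ξ * charFun (σ.map (‖w‖ • ·)) ((2 * Real.pi) • ξ)‖
        ≤ ‖h ξ‖ * (C * ((1 + ‖w‖) ^ (-sphereDecayExponent E) *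
            (1 + ‖ξ‖ ^ (-sphereDecayExponent E)))) := by
          rw [norm_mul]
          gcongr
          refine (hC _ (norm_nonneg w) ξ).trans (mul_le_mul_of_nonneg_left ?_ hC0)
          exact one_add_mul_rpow_neg_le (sphereDecayExponent_nonneg E) (norm_nonneg w)
            (norm_pos_iff.2 hξ)
      _ = C * (1 + ‖w‖) ^ (-sphereDecayExponent E) *
            (‖h ξ‖ * (1 + ‖ξ‖ ^ (-sphereDecayExponent E))) := by ring
      _ ≤ C * (1 + ‖w‖) ^ (-sphereDecayExponent E) * g ξ := by
          gcongr
          exact hhg ξ hξ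
  rw [div_mul_eq_mul_div, div_mul_eq_mul_div, le_div_iff₀' hmass]
  calc σ.real univ * ‖𝓕⁻ h w‖ = ‖∫ z, 𝓕⁻ h z ∂σ.map (‖w‖ • ·)‖ := by
        rw [havg, norm_smul, Real.norm_of_nonneg hmass.le]
    _ ≤ ∫ ξ, C * (1 + ‖w‖) ^ (-sphereDecayExponent E) * g ξ := by
        rw [integral_fourierInv_eq hint]
        exact norm_integral_le_of_norm_le (hg.const_mul _) hbound
    _ = C * (1 + ‖w‖) ^ (-sphereDecayExponent E) * ∫ ξ, g ξ := integral_const_mul _ _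

end IsSphereInvariant

end SphereDecay

section VanishingOrder

variable {V F : Type*} [NormedAddCommGroup V] [NormedSpace ℝ V] [FiniteDimensional ℝ V]
  [NormedAddCommGroup F] [NormedSpace ℝ F] [CompleteSpace F] {f : V → F}

lemma exists_norm_le_mul_pow_of_iteratedFDeriv_eq_zero {n : ℕ} (hf : ContDiff ℝ n f)
    (hf₀ : ∀ k < n, iteratedFDeriv ℝ k f 0 = 0) :
    ∃ C ≥ 0, ∀ x, ‖x‖ ≤ 1 → ‖f x‖ ≤ C * ‖x‖ ^ n := by
  obtain ⟨B, hB⟩ := (isCompact_closedBall (0 : V) 1).exists_bound_of_continuousOn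
    (hf.continuous_iteratedFDeriv le_rfl).continuousOn
  have hB₀ : 0 ≤ B := (norm_nonneg _).trans (hB 0 (by simp))
  rcases n with _ | n
  · exact ⟨B, hB₀, fun x hx => by simpa using hB x (by simpa using hx)⟩
  refine ⟨(n.factorial : ℝ)⁻¹ * B, by positivity, fun x hx => ?_⟩
  have htaylor := map_add_eq_sum_add_integral_iteratedFDeriv (x := 0) (y := x)
    fun t _ => hf.contDiffAt
  rw [Finset.sum_eq_zero fun k hk => by simp [hf₀ k (Finset.mem_range.1 hk)], zero_add,
    zero_add] at htaylor
  rw [htaylor, norm_smul, norm_inv, Real.norm_natCast, mul_assoc]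
  refine mul_le_mul_of_nonneg_left ?_ (by positivity)
  refine (intervalIntegral.norm_integral_le_of_norm_le_const fun t ht => ?_).trans_eq
    (by rw [sub_zero, abs_one, mul_one])
  rw [uIoc_of_le zero_le_one] at ht
  have hpow : ‖(1 - t) ^ n‖ ≤ 1 := by
    rw [norm_pow, Real.norm_of_nonneg (by linarith [ht.2])]
    exact pow_le_one₀ (by linarith [ht.2]) (by linarith [ht.1])
  have htx : 0 + t • x ∈ closedBall (0 : V) 1 := by
    rw [zero_add, mem_closedBall_zero_iff, norm_smul, Real.norm_of_nonneg ht.1.le]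
    exact mul_le_one₀ ht.2 (norm_nonneg x) hx
  calc ‖(1 - t) ^ n • iteratedFDeriv ℝ (n + 1) f (0 + t • x) fun _ => x‖
      ≤ 1 * (‖iteratedFDeriv ℝ (n + 1) f (0 + t • x)‖ * ‖x‖ ^ (n + 1)) := by
        rw [norm_smul]
        gcongr
        exact ContinuousMultilinearMap.le_opNorm_mul_pow_of_le _ (pi_norm_const_le x)
    _ ≤ B * ‖x‖ ^ (n + 1) := by
        rw [one_mul]
        gcongr
        exact hB _ htx

lemma exists_norm_le_mul_rpow_of_iteratedFDeriv_eq_zero {a B : ℝ} (ha : 0 ≤ a)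
    (hf : ContDiff ℝ ⌈a⌉₊ f) (hB : ∀ x, ‖f x‖ ≤ B)
    (hf₀ : ∀ n : ℕ, (n : ℝ) < a → iteratedFDeriv ℝ n f 0 = 0) :
    ∃ C ≥ 0, ∀ x, ‖f x‖ ≤ C * ‖x‖ ^ a := by
  obtain ⟨C, hC₀, hC⟩ := exists_norm_le_mul_pow_of_iteratedFDeriv_eq_zero hf
    fun n hn => hf₀ n (Nat.lt_ceil.1 hn)
  refine ⟨max C B, hC₀.trans (le_max_left _ _), fun x => ?_⟩
  rcases le_total ‖x‖ 1 with hx | hx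
  · calc ‖f x‖ ≤ C * ‖x‖ ^ (⌈a⌉₊ : ℝ) := by simpa using hC x hx
      _ ≤ max C B * ‖x‖ ^ a := mul_le_mul (le_max_left _ _)
          (Real.rpow_le_rpow_of_exponent_ge' (norm_nonneg x) hx ha (Nat.le_ceil a))
          (by positivity) (hC₀.trans (le_max_left _ _))
  · calc ‖f x‖ ≤ max C B * 1 := (hB x).trans (by simp)
      _ ≤ max C B * ‖x‖ ^ a := mul_le_mul_of_nonneg_left (Real.one_le_rpow hx ha)
          (hC₀.trans (le_max_left _ _))

end VanishingOrder

section SphericalMeans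

variable {E : Type*} [NormedAddCommGroup E] [InnerProductSpace ℝ E] [MeasurableSpace E]
  [BorelSpace E]

lemma IsSphereInvariant.isRadial_convMeasure_map_smul {F : Type*} [NormedAddCommGroup F]
    [NormedSpace ℝ F] {σ : Measure E} (hσ : IsSphereInvariant σ) {f : E → F} (hf : IsRadial f)
    (r : ℝ) :
    IsRadial (convMeasure f (σ.map (r • ·))) :=
  .of_comp_linearIsometryEquiv fun A => funext fun x => by
    simp only [Function.comp_apply, convMeasure]
    rw [← (hσ.measurePreserving_map_smul r A).integral_comp A.toHomeomorph.measurableEmbedding]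
    simp only [← map_sub]
    exact integral_congr_ae (.of_forall fun z => hf _ _ (A.norm_map _))

variable [FiniteDimensional ℝ E]

/-- The weight against which the pairing of `f ∗ σ_r` and `f ∗ σ_{r'}` is bounded: the decay of the
Fourier transform of the surface measure costs one factor `‖ξ‖ ^ (-a)` for each of the two spheres
and one for the translation. -/
def fourierWeight (f : E → ℂ) (ξ : E) : ℝ :=
  (‖𝓕 f ξ‖ * ‖ξ‖ ^ (-sphereDecayExponent E)) ^ 2 * (1 + ‖ξ‖ ^ (-sphereDecayExponent E))

lemma integrable_fourierWeight_convolution_self [Nontrivial E] {g : E → ℂ} {D : ℝ}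
    (hg : Integrable g) (hg' : Integrable (𝓕 g))
    (hD : ∀ ξ, ‖𝓕 g ξ‖ ≤ D * ‖ξ‖ ^ sphereDecayExponent E) :
    Integrable (fourierWeight (g ⋆[ContinuousLinearMap.mul ℂ ℂ] g)) := by
  have hbdd : ∀ ξ, ‖𝓕 g ξ‖ ≤ ∫ x, ‖g x‖ :=
    VectorFourier.norm_fourierIntegral_le_integral_norm _ _ _ g
  have hmeas := (continuous_fourier_of_integrable hg).measurable
  have hweight : fourierWeight (g ⋆[ContinuousLinearMap.mul ℂ ℂ] g) = fun ξ =>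
      ‖𝓕 g ξ‖ * ((‖𝓕 g ξ‖ * ‖ξ‖ ^ (-sphereDecayExponent E)) ^ 2 *
        (‖𝓕 g ξ‖ + ‖𝓕 g ξ‖ * ‖ξ‖ ^ (-sphereDecayExponent E))) := by
    ext ξ
    rw [fourierWeight, Real.fourier_mul_convolution_eq hg hg, norm_mul]
    ring
  have hdiv : ∀ ξ ≠ 0, ‖𝓕 g ξ‖ * ‖ξ‖ ^ (-sphereDecayExponent E) ≤ D := fun ξ hξ => by
    have := norm_pos_iff.2 hξ
    rw [Real.rpow_neg this.le, ← div_eq_mul_inv, div_le_iff₀ (by positivity)]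
    exact hD ξ
  rw [hweight]
  refine hg'.norm.mul_bdd (c := D ^ 2 * ((∫ x, ‖g x‖) + D)) (Measurable.aestronglyMeasurable ?_) ?_
  · fun_prop
  · filter_upwards [Measure.ae_ne volume 0] with ξ hξ
    rw [Real.norm_of_nonneg (by positivity)]
    gcongr
    exacts [hdiv ξ hξ, hbdd ξ, hdiv ξ hξ]

namespace IsSphereInvariant

variable {σ : Measure E} [IsFiniteMeasure σ]

lemma exists_norm_fourier_convMeasure_le [Nontrivial E] (hσ : IsSphereInvariant σ) :
    ∃ C ≥ 0, ∀ f : E → ℂ, Integrable f → ∀ r > 0, ∀ ξ ≠ 0,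
      ‖𝓕 (convMeasure f (σ.map (r • ·))) ξ‖ ≤
        C * r ^ (-sphereDecayExponent E) * (‖𝓕 f ξ‖ * ‖ξ‖ ^ (-sphereDecayExponent E)) := by
  obtain ⟨C, hC0, hC⟩ := hσ.exists_norm_charFun_map_smul_le
  refine ⟨C, hC0, fun f hf r hr ξ hξ => ?_⟩
  have hξ' := norm_pos_iff.2 hξ
  calc ‖𝓕 (convMeasure f (σ.map (r • ·))) ξ‖
      ≤ C * (1 + r * ‖ξ‖) ^ (-sphereDecayExponent E) * ‖𝓕 f ξ‖ := by
        rw [fourier_convMeasure hf, norm_smul]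
        gcongr
        simpa using hC r hr.le (-ξ)
    _ ≤ C * (r * ‖ξ‖) ^ (-sphereDecayExponent E) * ‖𝓕 f ξ‖ := by
        gcongr ?_ * _
        refine mul_le_mul_of_nonneg_left ?_ hC0
        exact Real.rpow_le_rpow_of_nonpos (by positivity) (by linarith)
          (neg_nonpos.2 (sphereDecayExponent_nonneg E))
    _ = C * r ^ (-sphereDecayExponent E) * (‖𝓕 f ξ‖ * ‖ξ‖ ^ (-sphereDecayExponent E)) := by
        rw [Real.mul_rpow hr.le hξ'.le]
        ring

lemma exists_norm_integral_convMeasure_mul_conj_le [Nontrivial E] [NeZero σ]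
    (hσ : IsSphereInvariant σ) :
    ∃ C ≥ 0, ∀ f : E → ℂ, IsRadial f → Continuous f → Integrable f → Integrable (𝓕 f) →
      Integrable (fourierWeight f) → ∀ r > 0, ∀ r' > 0, ∀ y y' : E,
        ‖∫ x, convMeasure f (σ.map (r • ·)) (x - y) *
          (starRingEnd ℂ) (convMeasure f (σ.map (r' • ·)) (x - y'))‖ ≤
        C * (r * r') ^ (-sphereDecayExponent E) * (1 + dist y y') ^ (-sphereDecayExponent E) *
          ∫ ξ, fourierWeight f ξ := by
  obtain ⟨C, hC0, hC⟩ := hσ.exists_norm_fourierInv_le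
  obtain ⟨D, hD0, hD⟩ := hσ.exists_norm_fourier_convMeasure_le
  refine ⟨C * D ^ 2, by positivity, fun f hrad hcont hf hf' hweight r hr r' hr' y y' => ?_⟩
  have hbdd : ∀ x, ‖f x‖ ≤ ∫ ξ, ‖𝓕 f ξ‖ := fun x => by
    rw [← congrFun (hcont.fourierInv_fourier_eq hf hf') x]
    exact VectorFourier.norm_fourierIntegral_le_integral_norm _ _ _ _ _
  have hradial : ∀ s, IsRadial (𝓕 (convMeasure f (σ.map (s • ·)))) := fun s =>
    (hσ.isRadial_convMeasure_map_smul hrad s).fourier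
  have hdecay : ∀ ξ ≠ 0, ‖𝓕 (convMeasure f (σ.map (r • ·))) ξ *
      (starRingEnd ℂ) (𝓕 (convMeasure f (σ.map (r' • ·))) ξ)‖ *
        (1 + ‖ξ‖ ^ (-sphereDecayExponent E)) ≤
      D ^ 2 * (r * r') ^ (-sphereDecayExponent E) * fourierWeight f ξ := fun ξ hξ => by
    rw [norm_mul, RCLike.norm_conj, fourierWeight, Real.mul_rpow hr.le hr'.le]
    refine (mul_le_mul_of_nonneg_right (mul_le_mul (hD f hf r hr ξ hξ) (hD f hf r' hr' ξ hξ)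
      (by positivity) (by positivity)) (by positivity)).trans_eq ?_
    ring
  rw [integral_comp_sub_mul_conj_eq_fourierInv (integrable_convMeasure hf _)
    (continuous_convMeasure hcont hbdd _) (integrable_fourier_convMeasure hf hf' _)
    (integrable_convMeasure hf _)]
  refine (hC _ _ (fun ξ η h => by simp only [hradial _ ξ η h])
    (integrable_fourier_mul_conj_fourier (integrable_fourier_convMeasure hf hf' _)
      (integrable_convMeasure hf _)) (hweight.const_mul _) hdecay _).trans_eq ?_
  rw [integral_const_mul, dist_comm, dist_eq_norm]
  ring

lemma exists_norm_integral_convMeasure_convolution_self_mul_conj_le [Nontrivial E] [NeZero σ]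
    (hσ : IsSphereInvariant σ) (g : 𝓢(E, ℂ)) (hg : IsRadial g)
    (hvanish : ∀ n : ℕ, (n : ℝ) < sphereDecayExponent E →
      iteratedFDeriv ℝ n (𝓕 (g : E → ℂ)) 0 = 0) :
    ∃ C ≥ 0, ∀ r > 0, ∀ r' > 0, ∀ y y' : E,
      ‖∫ x, convMeasure (g ⋆[ContinuousLinearMap.mul ℂ ℂ] g) (σ.map (r • ·)) (x - y) *
        (starRingEnd ℂ)
          (convMeasure (g ⋆[ContinuousLinearMap.mul ℂ ℂ] g) (σ.map (r' • ·)) (x - y'))‖ ≤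
      C * (r * r') ^ (-sphereDecayExponent E) * (1 + dist y y') ^ (-sphereDecayExponent E) := by
  obtain ⟨C, hC0, hC⟩ := hσ.exists_norm_integral_convMeasure_mul_conj_le
  obtain ⟨D, -, hD⟩ := exists_norm_le_mul_rpow_of_iteratedFDeriv_eq_zero
    (sphereDecayExponent_nonneg E) ((𝓕 g).smooth _)
    (VectorFourier.norm_fourierIntegral_le_integral_norm _ _ _ g) hvanish
  have hconv : ⇑(SchwartzMap.convolution (ContinuousLinearMap.mul ℂ ℂ) g g) =
      g ⋆[ContinuousLinearMap.mul ℂ ℂ] g :=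
    funext (SchwartzMap.convolution_apply _ g g)
  have hbound := hC (g ⋆[ContinuousLinearMap.mul ℂ ℂ] g) (hg.convolution hg _)
    (hconv ▸ SchwartzMap.continuous _) (hconv ▸ SchwartzMap.integrable _)
    (hconv ▸ (𝓕 (SchwartzMap.convolution (ContinuousLinearMap.mul ℂ ℂ) g g)).integrable)
    (integrable_fourierWeight_convolution_self g.integrable (𝓕 g).integrable hD)
  refine ⟨C * ∫ ξ, fourierWeight (g ⋆[ContinuousLinearMap.mul ℂ ℂ] g) ξ,
    mul_nonneg hC0 (integral_nonneg fun ξ => by unfold fourierWeight; positivity),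
    fun r hr r' hr' y y' => (hbound r hr r' hr' y y').trans_eq (by ring)⟩

end IsSphereInvariant

end SphericalMeans

section EuclideanSpheres

variable {d : ℕ}

lemma isSphereInvariant_sphereM_one : IsSphereInvariant (sphereM d 1) :=
  isSphereInvariant_hausdorffMeasure_restrict _

lemma ae_norm_eq_sphereM (r : ℝ) : ∀ᵐ z ∂sphereM d r, ‖z‖ = r := by
  filter_upwards [ae_restrict_mem isClosed_sphere.measurableSet] with z hz
    using mem_sphere_zero_iff_norm.1 hz

lemma sphereDecayExponent_Ed : sphereDecayExponent (Ed d) = ((d : ℝ) - 1) / 2 := by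
  simp [sphereDecayExponent]

variable [NeZero d]

instance : IsFiniteMeasure (sphereM d 1) where
  measure_univ_lt_top := by
    simpa [sphereM] using hausdorffMeasure_unitSphere_lt_top (Ed d)

instance : NeZero (sphereM d 1) where
  out := by
    rw [← Measure.measure_univ_pos]
    simpa [sphereM] using hausdorffMeasure_unitSphere_pos (Ed d)

lemma sphereM_eq_smul_map {r : ℝ} (hr : 0 < r) :
    sphereM d r = ENNReal.ofReal (r ^ ((d : ℝ) - 1)) • (sphereM d 1).map (r • ·) := by
  have hd : (0 : ℝ) ≤ (d : ℝ) - 1 := sub_nonneg.2 (Nat.one_le_cast.2 NeZero.one_le)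
  have hpow : ENNReal.ofReal (r ^ ((d : ℝ) - 1)) = (‖r‖₊ ^ ((d : ℝ) - 1) : ℝ≥0) := by
    rw [ENNReal.ofReal, ENNReal.coe_inj]
    ext
    rw [NNReal.coe_rpow, coe_nnnorm, Real.norm_of_nonneg hr.le,
      Real.coe_toNNReal _ (by positivity)]
  ext s hs
  have hscale : s ∩ sphere (0 : Ed d) r = r • ((r • ·) ⁻¹' s ∩ sphere 0 1) := by
    ext x
    rw [mem_smul_set_iff_inv_smul_mem₀ hr.ne']
    simp only [mem_inter_iff, mem_preimage, mem_sphere_zero_iff_norm, norm_smul, norm_inv,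
      Real.norm_of_nonneg hr.le, smul_inv_smul₀ hr.ne']
    rw [inv_mul_eq_one₀ hr.ne']
    exact and_congr_right fun _ => eq_comm
  have hm : Measurable (r • · : Ed d → Ed d) := by fun_prop
  rw [Measure.smul_apply, Measure.map_apply hm hs, sphereM, sphereM, Measure.restrict_apply hs,
    Measure.restrict_apply (hm hs), hscale, Measure.hausdorffMeasure_smul₀ hd hr.ne', hpow]
  rfl

lemma Fyr_eq_smul_convMeasure (ψ₀ : Ed d → ℂ) (y : Ed d) {r : ℝ} (hr : 0 < r) (x : Ed d) :
    Fyr d ψ₀ y r x =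
      r ^ ((d : ℝ) - 1) • convMeasure (psiOf d ψ₀) ((sphereM d 1).map (r • ·)) (x - y) := by
  rw [Fyr, sphereM_eq_smul_map hr, integral_smul_measure, ENNReal.toReal_ofReal (by positivity),
    convMeasure]

end EuclideanSpheres

section ScalarProduct

variable {d : ℕ} {ψ₀ : Ed d → ℂ} {R : ℝ}

lemma psiOf_eq_zero (hψ : ∀ x, ψ₀ x ≠ 0 → ‖x‖ ≤ R) {x : Ed d} (hx : 2 * R < ‖x‖) :
    psiOf d ψ₀ x = 0 := by
  refine integral_eq_zero_of_ae (.of_forall fun y => ?_)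
  by_contra h
  linarith [hψ y (left_ne_zero_of_mul h), hψ (x - y) (right_ne_zero_of_mul h),
    norm_le_norm_add_norm_sub' x y]

lemma Fyr_eq_zero (hψ : ∀ x, ψ₀ x ≠ 0 → ‖x‖ ≤ R) {x y : Ed d} {r : ℝ}
    (hx : 2 * R < |‖x - y‖ - r|) : Fyr d ψ₀ y r x = 0 := by
  refine integral_eq_zero_of_ae ?_
  filter_upwards [ae_norm_eq_sphereM r] with z hz
  exact psiOf_eq_zero hψ (hx.trans_le (by simpa [hz] using abs_norm_sub_norm_le (x - y) z))

lemma Fyr_mul_conj_Fyr_eq_zero (hψ : ∀ x, ψ₀ x ≠ 0 → ‖x‖ ≤ R) {y y' : Ed d} {r r' : ℝ}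
    (hfar : dist y y' + 4 * R < |r - r'|) (x : Ed d) :
    Fyr d ψ₀ y r x * (starRingEnd ℂ) (Fyr d ψ₀ y' r' x) = 0 := by
  by_cases hx : 2 * R < |‖x - y‖ - r|
  · rw [Fyr_eq_zero hψ hx, zero_mul]
  · have hx' : 2 * R < |‖x - y'‖ - r'| := by
      by_contra! hx'
      have hdist : |‖x - y‖ - ‖x - y'‖| ≤ dist y y' := by
        simpa [dist_comm y, dist_eq_norm] using abs_norm_sub_norm_le (x - y) (x - y')
      rw [not_lt] at hx
      rw [abs_le] at hx hx' hdist
      rcases lt_abs.1 hfar with h | h <;> linarith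
    rw [Fyr_eq_zero hψ hx', map_zero, mul_zero]

lemma exists_norm_integral_Fyr_mul_conj_le_dist [NeZero d] (hsmooth : ContDiff ℝ (⊤ : ℕ∞) ψ₀)
    (hsupp : HasCompactSupport ψ₀) (hrad : IsRadial ψ₀)
    (hvanish : ∀ n : ℕ, (n : ℝ) < ((d : ℝ) - 1) / 2 → iteratedFDeriv ℝ n (𝓕 ψ₀) 0 = 0) :
    ∃ C ≥ 0, ∀ r > 0, ∀ r' > 0, ∀ y y' : Ed d,
      ‖∫ x, Fyr d ψ₀ y r x * (starRingEnd ℂ) (Fyr d ψ₀ y' r' x)‖ ≤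
        C * (r * r') ^ (((d : ℝ) - 1) / 2) * (1 + dist y y') ^ (-(((d : ℝ) - 1) / 2)) := by
  obtain ⟨C, hC0, hC⟩ := isSphereInvariant_sphereM_one (d := d)
    |>.exists_norm_integral_convMeasure_convolution_self_mul_conj_le
      (hsupp.toSchwartzMap hsmooth) hrad (by rwa [sphereDecayExponent_Ed])
  rw [sphereDecayExponent_Ed] at hC
  refine ⟨C, hC0, fun r hr r' hr' y y' => ?_⟩
  have hscale : ∀ x, Fyr d ψ₀ y r x * (starRingEnd ℂ) (Fyr d ψ₀ y' r' x) =
      (r * r') ^ ((d : ℝ) - 1) • (convMeasure (psiOf d ψ₀) ((sphereM d 1).map (r • ·)) (x - y) *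
        (starRingEnd ℂ) (convMeasure (psiOf d ψ₀) ((sphereM d 1).map (r' • ·)) (x - y'))) := by
    intro x
    rw [Fyr_eq_smul_convMeasure ψ₀ y hr, Fyr_eq_smul_convMeasure ψ₀ y' hr',
      Real.mul_rpow hr.le hr'.le, Complex.real_smul, Complex.real_smul, Complex.real_smul]
    simp only [map_mul, Complex.conj_ofReal, Complex.ofReal_mul]
    ring
  have hrr' : (r * r') ^ ((d : ℝ) - 1) * (r * r') ^ (-(((d : ℝ) - 1) / 2)) =
      (r * r') ^ (((d : ℝ) - 1) / 2) := by
    rw [← Real.rpow_add (by positivity)]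
    congr 1
    ring
  simp only [hscale]
  rw [integral_smul, norm_smul, Real.norm_of_nonneg (by positivity)]
  calc _ ≤ (r * r') ^ ((d : ℝ) - 1) * (C * (r * r') ^ (-(((d : ℝ) - 1) / 2)) *
        (1 + dist y y') ^ (-(((d : ℝ) - 1) / 2))) := by
        gcongr
        exact hC r hr r' hr' y y'
    _ = _ := by
        rw [← hrr']
        ring

theorem scalar_product_estimate_general [NeZero d] (hsmooth : ContDiff ℝ (⊤ : ℕ∞) ψ₀)
    (hsupp : HasCompactSupport ψ₀) (hrad : IsRadial ψ₀)
    (hvanish : ∀ n : ℕ, (n : ℝ) < ((d : ℝ) - 1) / 2 → iteratedFDeriv ℝ n (𝓕 ψ₀) 0 = 0) :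
    ∃ C > 0, ∀ r > 0, ∀ r' > 0, ∀ y y' : Ed d,
      ‖∫ x, Fyr d ψ₀ y r x * (starRingEnd ℂ) (Fyr d ψ₀ y' r' x)‖ ≤
        C * (r * r') ^ (((d : ℝ) - 1) / 2) /
          (1 + dist y y' + |r - r'|) ^ (((d : ℝ) - 1) / 2) := by
  obtain ⟨K, hK0, hK⟩ := exists_norm_integral_Fyr_mul_conj_le_dist hsmooth hsupp hrad hvanish
  obtain ⟨R, hR0, hR⟩ : ∃ R > 0, ∀ x, ψ₀ x ≠ 0 → ‖x‖ ≤ R := by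
    obtain ⟨R, hR0, hR⟩ := hsupp.isCompact.isBounded.exists_pos_norm_le
    exact ⟨R, hR0, fun x hx => hR x (subset_tsupport _ hx)⟩
  have hα := sphereDecayExponent_nonneg (Ed d)
  rw [sphereDecayExponent_Ed] at hα
  set α := ((d : ℝ) - 1) / 2
  refine ⟨K * (2 + 4 * R) ^ α + 1, by positivity, fun r hr r' hr' y y' => ?_⟩
  rcases lt_or_ge (dist y y' + 4 * R) |r - r'| with hfar | hnear
  · simp only [Fyr_mul_conj_Fyr_eq_zero hR hfar, integral_zero, norm_zero]
    positivity
  · have hcmp : 1 + dist y y' + |r - r'| ≤ (2 + 4 * R) * (1 + dist y y') := by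
      nlinarith [mul_nonneg hR0.le (dist_nonneg (x := y) (y := y'))]
    rw [le_div_iff₀ (by positivity)]
    calc _ ≤ K * (r * r') ^ α * (1 + dist y y') ^ (-α) * ((2 + 4 * R) * (1 + dist y y')) ^ α := by
          gcongr
          exact hK r hr r' hr' y y'
      _ = K * (2 + 4 * R) ^ α * (r * r') ^ α *
          ((1 + dist y y') ^ (-α) * (1 + dist y y') ^ α) := by
          rw [Real.mul_rpow (x := 2 + 4 * R) (by positivity) (by positivity)]
          ring
      _ = K * (2 + 4 * R) ^ α * (r * r') ^ α := by
          rw [← Real.rpow_add (by positivity), neg_add_cancel, Real.rpow_zero, mul_one]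
      _ ≤ (K * (2 + 4 * R) ^ α + 1) * (r * r') ^ α := by
          gcongr
          exact le_add_of_nonneg_right zero_le_one

end ScalarProduct

/-- the scalar product estimate
`|⟨F_{y,r}, F_{y',r'}⟩| ≤ C (rr')^{(d-1)/2} / (1 + |y-y'| + |r-r'|)^{(d-1)/2}`. -/
theorem scalar_product_estimate
    (d : ℕ) (hd : 2 ≤ d) (ψ₀ : Ed d → ℂ) (hψ : Admissible d ψ₀) :
    ∃ C : ℝ, 0 < C ∧
      ∀ r r' : ℝ, 1 < r → 1 < r' → ∀ y y' : Ed d,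
        ‖∫ x : Ed d, Fyr d ψ₀ y r x * (starRingEnd ℂ) (Fyr d ψ₀ y' r' x)‖ ≤
          C * (r * r') ^ (((d : ℝ) - 1) / 2) /
            (1 + dist y y' + |r - r'|) ^ (((d : ℝ) - 1) / 2) := by
  have : NeZero d := ⟨by omega⟩
  obtain ⟨hsmooth, hsupp, hrad, hvanish⟩ := hψ
  obtain ⟨C, hC0, hC⟩ := scalar_product_estimate_general hsmooth
    (.of_support_subset_isCompact (isCompact_closedBall 0 (1 / 10))
      fun x hx => mem_closedBall_zero_iff.2 (hsupp x hx)) hrad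
    fun n hn => hvanish n (by exact_mod_cast (by linarith : (n : ℝ) < 20 * d))
  exact ⟨C, hC0, fun r r' hr hr' => hC r (by linarith) r' (by linarith)⟩
end
end

section
/- Let (𝒳_1, μ_1) and (𝒳_2, μ_2) be σ-finite measure spaces and let μ = μ_1 × μ_2 be the product measure. Then for 1 ≤ p < ∞ and p ≤ ν ≤ ∞ there is a constant C = C(p,ν) such that for every μ-measurable function G on 𝒳_1 × 𝒳_2, ‖G‖_{L^{p,ν}(𝒳_1×𝒳_2, μ)} ≤ C (∫_{𝒳_1} ‖G(x_1, ·)‖_{L^{p,ν}(𝒳_2, μ_2)}^p dμ_1(x_1))^{1/p}. -/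
open MeasureTheory Set
open scoped ENNReal NNReal

noncomputable section

/-- The Lorentz `L^{p,ν}` quasi-norm (`ν = ⊤` giving the weak-type quasi-norm). -/
def lorentzNorm {X : Type*} [MeasurableSpace X] (μ : Measure X) (p : ℝ) (ν : ℝ≥0∞)
    (f : X → ℂ) : ℝ≥0∞ :=
  if ν = ⊤ then
    ⨆ (α : ℝ) (_ : 0 < α), ENNReal.ofReal α * (μ {x | α < ‖f x‖}) ^ (1 / p)
  else
    (ENNReal.ofReal p *
        ∫⁻ α in Set.Ioi (0 : ℝ),
          ENNReal.ofReal (α ^ (ν.toReal - 1)) * (μ {x | α < ‖f x‖}) ^ (ν.toReal / p))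
      ^ (1 / ν.toReal)

/-!
The distribution function of `G` on the product is the `x₁`-integral of the distribution functions
of its sections `G (x₁, ·)`. For `ν < ∞`, the power `‖f‖_{L^{p,ν}}^p` is the `L^{ν/p}` norm of the
distribution function of `f` with respect to `p α^{ν-1} dα`; since `ν / p ≥ 1`, Minkowski's integral
inequality moves that norm inside the `x₁`-integral. For `ν = ∞` the `L^{ν/p}` norm becomes a
supremum, and `sup ∫ ≤ ∫ sup` replaces Minkowski's inequality. The constant is `1`.
-/

theorem iSup_rpow_of_pos {ι : Sort*} {r : ℝ} (hr : 0 < r) (u : ι → ℝ≥0∞) :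
    (⨆ i, u i) ^ r = ⨆ i, u i ^ r :=
  (ENNReal.orderIsoRpow r hr).map_iSup u

theorem rpow_one_div_le_of_le_mul_rpow_one_div {r q : ℝ} (hrq : r.HolderConjugate q)
    {I M : ℝ≥0∞} (hI : I ≠ ⊤) (h : I ≤ M * I ^ (1 / q)) : I ^ (1 / r) ≤ M := by
  rcases eq_or_ne I 0 with rfl | hI0
  · simp [hrq.pos]
  refine (ENNReal.mul_le_mul_iff_left (ENNReal.rpow_pos (pos_iff_ne_zero.2 hI0) hI).ne'
    (ENNReal.rpow_ne_top_of_nonneg hrq.symm.one_div_nonneg hI)).1 ?_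
  rwa [← ENNReal.rpow_add _ _ hI0 hI, hrq.one_div_add_one_div, one_div_one, ENNReal.rpow_one]

section MinkowskiIntegral

variable {X A : Type*} [MeasurableSpace X] [MeasurableSpace A] {μ : Measure X} {κ : Measure A}
  {f : X → A → ℝ≥0∞}

theorem lintegral_mul_lintegral_le [SFinite μ] [SFinite κ] {r q : ℝ} (hrq : r.HolderConjugate q)
    (hf : AEMeasurable (Function.uncurry f) (μ.prod κ)) {g : A → ℝ≥0∞} (hg : AEMeasurable g κ) :
    ∫⁻ a, (∫⁻ x, f x a ∂μ) * g a ∂κ ≤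
      (∫⁻ x, (∫⁻ a, f x a ^ r ∂κ) ^ (1 / r) ∂μ) * (∫⁻ a, g a ^ q ∂κ) ^ (1 / q) := by
  have hf_section : ∀ᵐ x ∂μ, AEMeasurable (f x) κ :=
    (Measure.ae_ae_of_ae_prod hf.ae_eq_mk).mono fun _ hx =>
      ⟨_, hf.measurable_mk.comp measurable_prodMk_left, hx⟩
  calc ∫⁻ a, (∫⁻ x, f x a ∂μ) * g a ∂κ
      ≤ ∫⁻ a, ∫⁻ x, f x a * g a ∂μ ∂κ :=
        lintegral_mono fun a => lintegral_mul_const_le _ _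
    _ = ∫⁻ x, ∫⁻ a, f x a * g a ∂κ ∂μ :=
        (lintegral_lintegral_swap (hf.mul hg.comp_snd)).symm
    _ ≤ ∫⁻ x, (∫⁻ a, f x a ^ r ∂κ) ^ (1 / r) * (∫⁻ a, g a ^ q ∂κ) ^ (1 / q) ∂μ :=
        lintegral_mono_ae <| hf_section.mono fun x hx =>
          ENNReal.lintegral_mul_le_Lp_mul_Lq κ hrq hx hg
    _ = _ := lintegral_mul_const'' _ ((hf.pow_const r).lintegral_prod_right'.pow_const _)

theorem lintegral_rpow_le_of_le_lintegral [SFinite μ] [SFinite κ] {r : ℝ} (hr : 1 < r)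
    (hf : AEMeasurable (Function.uncurry f) (μ.prod κ)) {g : A → ℝ≥0∞} (hg : AEMeasurable g κ)
    (hgf : ∀ᵐ a ∂κ, g a ≤ ∫⁻ x, f x a ∂μ) (hg_top : ∫⁻ a, g a ^ r ∂κ ≠ ⊤) :
    (∫⁻ a, g a ^ r ∂κ) ^ (1 / r) ≤ ∫⁻ x, (∫⁻ a, f x a ^ r ∂κ) ^ (1 / r) ∂μ := by
  have hrq := Real.HolderConjugate.conjExponent hr
  -- Hölder reproduces `∫ g ^ r` on the right, where its finiteness lets a power of it be cancelled.
  refine rpow_one_div_le_of_le_mul_rpow_one_div hrq hg_top ?_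
  calc ∫⁻ a, g a ^ r ∂κ
      = ∫⁻ a, g a * g a ^ (r - 1) ∂κ := by
        refine lintegral_congr fun a => ?_
        simpa using ENNReal.rpow_add_of_nonneg (x := g a) 1 (r - 1) zero_le_one hrq.sub_one_pos.le
    _ ≤ ∫⁻ a, (∫⁻ x, f x a ∂μ) * g a ^ (r - 1) ∂κ :=
        lintegral_mono_ae <| hgf.mono fun a ha => by gcongr
    _ ≤ (∫⁻ x, (∫⁻ a, f x a ^ r ∂κ) ^ (1 / r) ∂μ) *
          (∫⁻ a, (g a ^ (r - 1)) ^ r.conjExponent ∂κ) ^ (1 / r.conjExponent) :=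
        lintegral_mul_lintegral_le hrq hf (hg.pow_const _)
    _ = (∫⁻ x, (∫⁻ a, f x a ^ r ∂κ) ^ (1 / r) ∂μ) *
          (∫⁻ a, g a ^ r ∂κ) ^ (1 / r.conjExponent) := by
        simp only [← ENNReal.rpow_mul, hrq.sub_one_mul_conj]

theorem lintegral_rpow_lintegral_le_of_isFiniteMeasure [SFinite μ] [IsFiniteMeasure κ] {r : ℝ}
    (hr : 1 < r) (hf : AEMeasurable (Function.uncurry f) (μ.prod κ)) :
    ∫⁻ a, (∫⁻ x, f x a ∂μ) ^ r ∂κ ≤ (∫⁻ x, (∫⁻ a, f x a ^ r ∂κ) ^ (1 / r) ∂μ) ^ r := by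
  have hr0 : 0 < r := one_pos.trans hr
  let F (a : A) : ℝ≥0∞ := ∫⁻ x, f x a ∂μ
  have hF : AEMeasurable F κ := hf.lintegral_prod_left
  have truncation_meas (n : ℕ) : AEMeasurable (fun a => F a ⊓ n) κ := hF.inf aemeasurable_const
  have truncation_ne_top (n : ℕ) : ∫⁻ a, (F a ⊓ n) ^ r ∂κ ≠ ⊤ := by
    have hn : ((n : ℝ≥0∞) ^ r) ≠ ⊤ :=
      ENNReal.rpow_ne_top_of_nonneg hr0.le (ENNReal.natCast_ne_top n)
    refine ne_top_of_le_ne_top (ENNReal.mul_ne_top hn (measure_ne_top κ univ)) ?_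
    rw [← lintegral_const]
    gcongr
    exact inf_le_right
  have iSup_truncation (a : A) : F a ^ r = ⨆ n : ℕ, (F a ⊓ n) ^ r := by
    rw [← iSup_rpow_of_pos hr0, ← inf_iSup_eq, ENNReal.iSup_natCast, inf_top_eq]
  have monotone_truncation (a : A) : Monotone fun n : ℕ => (F a ⊓ n) ^ r := fun m n hmn => by
    dsimp only
    gcongr
  calc ∫⁻ a, F a ^ r ∂κ
      = ⨆ n : ℕ, ∫⁻ a, (F a ⊓ n) ^ r ∂κ := by
        simp only [iSup_truncation]
        exact lintegral_iSup' (fun n => (truncation_meas n).pow_const r)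
          (.of_forall monotone_truncation)
    _ ≤ _ := iSup_le fun n => by
        rw [← ENNReal.rpow_inv_le_iff hr0, ← one_div]
        exact lintegral_rpow_le_of_le_lintegral hr hf (truncation_meas n)
          (.of_forall fun _ => inf_le_left) (truncation_ne_top n)

theorem lintegral_rpow_lintegral_le [SFinite μ] [SFinite κ] {r : ℝ} (hr : 1 ≤ r)
    (hf : AEMeasurable (Function.uncurry f) (μ.prod κ)) :
    (∫⁻ a, (∫⁻ x, f x a ∂μ) ^ r ∂κ) ^ (1 / r) ≤ ∫⁻ x, (∫⁻ a, f x a ^ r ∂κ) ^ (1 / r) ∂μ := by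
  rcases hr.eq_or_lt with rfl | hr
  · simpa using (lintegral_lintegral_swap hf).ge
  have hr0 : 0 < r := one_pos.trans hr
  rw [one_div, ENNReal.rpow_inv_le_iff hr0, ← one_div]
  have partial_sum_le (s : Finset ℕ) : ∑ i ∈ s, sfiniteSeq κ i ≤ κ := by
    refine Measure.le_iff.2 fun t ht => ?_
    conv_rhs => rw [← sum_sfiniteSeq κ, Measure.sum_apply _ ht]
    simpa only [Measure.finsetSum_apply] using ENNReal.sum_le_tsum s
  conv_lhs => rw [← sum_sfiniteSeq κ, lintegral_sum_measure, ENNReal.tsum_eq_iSup_sum]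
  refine iSup_le fun s => ?_
  rw [← lintegral_finsetSum_measure]
  have hκs := partial_sum_le s
  refine (lintegral_rpow_lintegral_le_of_isFiniteMeasure hr
    (hf.mono_measure (Measure.prod_mono le_rfl hκs))).trans ?_
  gcongr

end MinkowskiIntegral

section DistributionFunction

variable {X E : Type*} [MeasurableSpace X] [Norm E]

/-- The distribution function `α ↦ μ {|f| > α}`, through which `f` enters its Lorentz quasi-norms.
It is defined at every real `α`, although only `α > 0` matters there. -/
def distributionFunction (μ : Measure X) (f : X → E) (α : ℝ) : ℝ≥0∞ :=
  μ {x | α < ‖f x‖}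

theorem antitone_distributionFunction (μ : Measure X) (f : X → E) :
    Antitone (distributionFunction μ f) := fun _ _ hαβ =>
  measure_mono fun _ hx => hαβ.trans_lt hx

theorem distributionFunction_congr_ae {μ : Measure X} {f g : X → E} (h : f =ᵐ[μ] g) :
    distributionFunction μ f = distributionFunction μ g := by
  funext α
  exact measure_congr (h.fun_comp fun y => α < ‖y‖)

end DistributionFunction

section DistributionFunctionProd

variable {X₁ X₂ E : Type*} [MeasurableSpace X₁] [MeasurableSpace X₂]
  [NormedAddCommGroup E] [MeasurableSpace E] [OpensMeasurableSpace E]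
  {G : X₁ × X₂ → E}

theorem distributionFunction_prod (μ₁ : Measure X₁) (μ₂ : Measure X₂) [SFinite μ₂]
    (hG : Measurable G) (α : ℝ) :
    distributionFunction (μ₁.prod μ₂) G α =
      ∫⁻ x₁, distributionFunction μ₂ (fun x₂ => G (x₁, x₂)) α ∂μ₁ :=
  Measure.prod_apply (measurableSet_lt measurable_const hG.norm)

theorem measurable_distributionFunction_section (μ₂ : Measure X₂) [SFinite μ₂]
    (hG : Measurable G) :
    Measurable (Function.uncurry fun x₁ => distributionFunction μ₂ fun x₂ => G (x₁, x₂)) :=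
  have h_superlevel : MeasurableSet {z : (X₁ × ℝ) × X₂ | z.1.2 < ‖G (z.1.1, z.2)‖} :=
    measurableSet_lt (by fun_prop) (by fun_prop)
  measurable_measure_prodMk_left h_superlevel

end DistributionFunctionProd

section LorentzNorm

variable {X : Type*} [MeasurableSpace X]

theorem lorentzNorm_congr_ae {μ : Measure X} {f g : X → ℂ} (h : f =ᵐ[μ] g) (p : ℝ) (ν : ℝ≥0∞) :
    lorentzNorm μ p ν f = lorentzNorm μ p ν g := by
  have h_distrib (α : ℝ) : μ {x | α < ‖f x‖} = μ {x | α < ‖g x‖} :=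
    congrFun (distributionFunction_congr_ae h) α
  simp only [lorentzNorm, h_distrib]

theorem lorentzNorm_top_rpow (μ : Measure X) {p : ℝ} (hp : 0 < p) (f : X → ℂ) :
    lorentzNorm μ p ⊤ f ^ p =
      ⨆ (α : ℝ) (_ : 0 < α), ENNReal.ofReal α ^ p * distributionFunction μ f α := by
  simp only [lorentzNorm, if_true, iSup_rpow_of_pos hp, ENNReal.mul_rpow_of_nonneg _ _ hp.le,
    ← ENNReal.rpow_mul, one_div_mul_cancel hp.ne', ENNReal.rpow_one, distributionFunction]

/-- The measure `p α^{ν-1} dα` on `(0, ∞)`, for a finite exponent `ν`: the `p`-th power of the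
`L^{p,ν}` quasi-norm is the `L^{ν/p}` norm of the distribution function for this measure. -/
def lorentzMeasure (p ν : ℝ) : Measure ℝ :=
  (volume.restrict (Ioi 0)).withDensity fun α => ENNReal.ofReal p * ENNReal.ofReal (α ^ (ν - 1))

instance (p ν : ℝ) : SFinite (lorentzMeasure p ν) :=
  inferInstanceAs (SFinite (Measure.withDensity _ _))

theorem lintegral_lorentzMeasure (p ν : ℝ) {g : ℝ → ℝ≥0∞} (hg : Measurable g) :
    ∫⁻ α, g α ∂lorentzMeasure p ν =
      ENNReal.ofReal p * ∫⁻ α in Ioi 0, ENNReal.ofReal (α ^ (ν - 1)) * g α := by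
  rw [lorentzMeasure, lintegral_withDensity_eq_lintegral_mul _ (by fun_prop) hg,
    ← lintegral_const_mul' _ _ ENNReal.ofReal_ne_top]
  simp only [Pi.mul_apply, mul_assoc]

theorem lorentzNorm_rpow_of_ne_top (μ : Measure X) (p : ℝ) {ν : ℝ≥0∞} (hν : ν ≠ ⊤) (f : X → ℂ) :
    lorentzNorm μ p ν f ^ p =
      (∫⁻ α, distributionFunction μ f α ^ (ν.toReal / p) ∂lorentzMeasure p ν.toReal) ^
        (1 / (ν.toReal / p)) := by
  rw [lintegral_lorentzMeasure _ _
    ((antitone_distributionFunction μ f).measurable.pow_const _), lorentzNorm, if_neg hν,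
    ← ENNReal.rpow_mul, one_div_div, one_div_mul_eq_div]
  rfl

end LorentzNorm

section Fubini

variable {X₁ X₂ : Type*} [MeasurableSpace X₁] [MeasurableSpace X₂]
  (μ₁ : Measure X₁) (μ₂ : Measure X₂) {p : ℝ} {ν : ℝ≥0∞} {G : X₁ × X₂ → ℂ}

theorem lorentzNorm_top_prod_rpow_le [SFinite μ₂] (hp : 0 < p) (hG : Measurable G) :
    lorentzNorm (μ₁.prod μ₂) p ⊤ G ^ p ≤
      ∫⁻ x₁, lorentzNorm μ₂ p ⊤ (fun x₂ => G (x₁, x₂)) ^ p ∂μ₁ := by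
  have hα_top (α : ℝ) : ENNReal.ofReal α ^ p ≠ ⊤ :=
    ENNReal.rpow_ne_top_of_nonneg hp.le ENNReal.ofReal_ne_top
  simp only [lorentzNorm_top_rpow _ hp, distributionFunction_prod μ₁ μ₂ hG,
    ← lintegral_const_mul' _ _ (hα_top _)]
  exact iSup₂_lintegral_le _

theorem lorentzNorm_prod_rpow_le_of_ne_top [SFinite μ₁] [SFinite μ₂] (hp : 0 < p)
    (hpν : ENNReal.ofReal p ≤ ν) (hν : ν ≠ ⊤) (hG : Measurable G) :
    lorentzNorm (μ₁.prod μ₂) p ν G ^ p ≤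
      ∫⁻ x₁, lorentzNorm μ₂ p ν (fun x₂ => G (x₁, x₂)) ^ p ∂μ₁ := by
  have one_le_ratio : 1 ≤ ν.toReal / p :=
    (one_le_div hp).2 ((ENNReal.ofReal_le_iff_le_toReal hν).1 hpν)
  simp only [lorentzNorm_rpow_of_ne_top _ p hν, distributionFunction_prod μ₁ μ₂ hG]
  exact lintegral_rpow_lintegral_le one_le_ratio
    (measurable_distributionFunction_section μ₂ hG).aemeasurable

theorem lorentz_fubini_general [SFinite μ₁] [SFinite μ₂] (hp : 0 < p)
    (hpν : ENNReal.ofReal p ≤ ν) (hG : AEMeasurable G (μ₁.prod μ₂)) :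
    lorentzNorm (μ₁.prod μ₂) p ν G ≤
      (∫⁻ x₁, lorentzNorm μ₂ p ν (fun x₂ => G (x₁, x₂)) ^ p ∂μ₁) ^ (1 / p) := by
  have h_section : ∀ᵐ x₁ ∂μ₁, lorentzNorm μ₂ p ν (fun x₂ => G (x₁, x₂)) =
      lorentzNorm μ₂ p ν fun x₂ => hG.mk G (x₁, x₂) :=
    (Measure.ae_ae_of_ae_prod hG.ae_eq_mk).mono fun _ h => lorentzNorm_congr_ae h p ν
  rw [lorentzNorm_congr_ae hG.ae_eq_mk,
    lintegral_congr_ae (h_section.mono fun _ h => congrArg (· ^ p) h), one_div,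
    ENNReal.le_rpow_inv_iff hp]
  rcases eq_or_ne ν ⊤ with rfl | hν
  · exact lorentzNorm_top_prod_rpow_le μ₁ μ₂ hp hG.measurable_mk
  · exact lorentzNorm_prod_rpow_le_of_ne_top μ₁ μ₂ hp hpν hν hG.measurable_mk

end Fubini

/-- the Fubini-type property of Lorentz norms on a product space:
`‖G‖_{L^{p,ν}(μ₁×μ₂)} ≤ C (∫ ‖G(x₁,·)‖_{L^{p,ν}(μ₂)}^p dμ₁)^{1/p}` for
`1 ≤ p < ∞`, `p ≤ ν ≤ ∞`. -/
theorem lorentz_fubini (p : ℝ) (ν : ℝ≥0∞) (hp : 1 ≤ p) (hν : ENNReal.ofReal p ≤ ν) :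
    ∃ C : ℝ, 0 < C ∧
      ∀ (X₁ X₂ : Type) [MeasurableSpace X₁] [MeasurableSpace X₂],
      ∀ (μ₁ : Measure X₁) (μ₂ : Measure X₂) [SigmaFinite μ₁] [SigmaFinite μ₂],
      ∀ G : X₁ × X₂ → ℂ, AEMeasurable G (μ₁.prod μ₂) →
        lorentzNorm (μ₁.prod μ₂) p ν G ≤
          ENNReal.ofReal C *
            (∫⁻ x₁, lorentzNorm μ₂ p ν (fun x₂ => G (x₁, x₂)) ^ p ∂μ₁) ^ (1 / p) := by
  refine ⟨1, one_pos, fun _ _ _ _ μ₁ μ₂ _ _ _ hG => ?_⟩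
  simpa using lorentz_fubini_general μ₁ μ₂ (one_pos.trans_le hp) hν hG
end
end
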